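/- Let W : ℕ → {a,b} be a recurrent infinite word over the two-letter alphabet {a,b}. Then W is Sturmian (p_W(n) = n+1 for all n ≥ 1) if and only if W is a mechanical word with irrational slope: there exist an irrational α ∈ (0,1), a point x₀ ∈ [0,1), and a half-open arc U of the circle ℝ/ℤ of length α (i.e. U is the image mod 1 of an interval [c, c+α) or (c, c+α]) such that for every n ≥ 0, W(n) = a if x₀ + nα (mod 1) ∈ U and W(n) = b otherwise. -/

import Mathlib

/-- The two-letter alphabet `{a, b}`. -/
inductive AB : Type
  | a : AB
  | b : AB
  deriving DecidableEq

/-- The finite word `u` occurs in the infinite word `W` at position `i`. -/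
def occursAt {A : Type*} (W : ℕ → A) (u : List A) (i : ℕ) : Prop :=
  u = (List.range u.length).map (fun j => W (i + j))

/-- `u` is a factor (subword) of the infinite word `W`. -/
def IsFactor {A : Type*} (W : ℕ → A) (u : List A) : Prop :=
  ∃ i, occursAt W u i

/-- `W` is recurrent: every factor occurs at infinitely many positions. -/
def Recurrent {A : Type*} (W : ℕ → A) : Prop :=
  ∀ u, IsFactor W u → ∀ N, ∃ i, N ≤ i ∧ occursAt W u i

/-- The complexity function: the number of distinct factors of `W` of length `n`. -/
noncomputable def complexity {A : Type*} (W : ℕ → A) (n : ℕ) : ℕ :=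
  {u : List A | u.length = n ∧ IsFactor W u}.ncard

/-- `W` is Sturmian: it has exactly `n + 1` factors of length `n` for all `n ≥ 1`. -/
def Sturmian (W : ℕ → AB) : Prop :=
  ∀ n, 1 ≤ n → complexity W n = n + 1

/-- `W` is a mechanical word with irrational slope: there are an irrational
`α ∈ (0,1)`, a point `x₀ ∈ [0,1)` and a half-open arc of length `α` on the circle
`ℝ/ℤ` (the image mod 1 of `[c, c+α)` or of `(c, c+α]`) such that `W n = a` exactly
when `x₀ + n·α (mod 1)` lies in the arc, and `W n = b` otherwise. -/
def MechanicalIrrational (W : ℕ → AB) : Prop :=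
  ∃ α : ℝ, Irrational α ∧ 0 < α ∧ α < 1 ∧
    ∃ x₀ ∈ Set.Ico (0 : ℝ) 1, ∃ c : ℝ,
      ((∀ n : ℕ, (W n = AB.a ↔ ∃ k : ℤ, x₀ + n * α + k ∈ Set.Ico c (c + α)) ∧
                 (W n = AB.b ↔ ¬ ∃ k : ℤ, x₀ + n * α + k ∈ Set.Ico c (c + α))) ∨
       (∀ n : ℕ, (W n = AB.a ↔ ∃ k : ℤ, x₀ + n * α + k ∈ Set.Ioc c (c + α)) ∧
                 (W n = AB.b ↔ ¬ ∃ k : ℤ, x₀ + n * α + k ∈ Set.Ioc c (c + α))))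

/-!
Count the letters `a` in the prefixes of `W` to get a height function `h`.

If `W` is Sturmian, it is not eventually periodic and has exactly one right special factor of each
length. A shortest pair of equally long intervals on which the increments of `h` differ by two would
have the form `a u a`, `b u b` with `u` a palindrome. Then `u` is right special, so one of `a u` and
`b u` is, say `a u`; but `a u` starts at no position of `b u b`, while every stretch of `n + 1`
positions meets the right special factor of length `n`. Hence `h` is balanced, so it has a slope
`α`. A rational slope would force `W` to be eventually periodic, and for an irrational slope `h n`
is `⌊ρ + n α⌋` for all `n` or `⌈ρ + n α⌉` for all `n`. These are exactly the height functions of the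
mechanical words.

Conversely, if `h n = ⌊ρ + n α⌋`, then the factor of length `n` at position `i` depends only on
which of the `n` points `1 - {j α}`, `1 ≤ j ≤ n`, lie at or below `{ρ + i α}`. The points are
distinct and the orbit `{ρ + i α}` is dense, so exactly `n + 1` sets of points arise. Changing the
signs of `ρ` and `α` reduces ceilings to floors.
-/

instance : Fintype AB := ⟨{AB.a, AB.b}, fun x => by cases x <;> simp⟩

section Windows

variable {A : Type*} {W : ℕ → A} {n i j k : ℕ}

/-- The factor of length `n` of `W` at position `i`, encoded as a function on `Fin n` so that the
factors of a given length form the range of `window W n`. -/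
def window (W : ℕ → A) (n i : ℕ) : Fin n → A := fun t => W (i + t)

/-- The infinite word `W` is eventually periodic. -/
def EventuallyPeriodic (W : ℕ → A) : Prop :=
  ∃ N q, 0 < q ∧ ∀ i, N ≤ i → W (i + q) = W i

/-- The word `u` is a right special factor of `W`: it occurs in `W` followed by two different
letters. -/
def RightSpecial (W : ℕ → A) (u : Fin n → A) : Prop :=
  ∃ i j, window W n i = u ∧ window W n j = u ∧ W (i + n) ≠ W (j + n)

theorem window_eq_window_iff :
    window W n i = window W n j ↔ ∀ t < n, W (i + t) = W (j + t) := by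
  simp only [funext_iff, window, Fin.forall_iff]

theorem window_succ_eq_iff_init :
    window W (n + 1) i = window W (n + 1) j ↔
      window W n i = window W n j ∧ W (i + n) = W (j + n) := by
  simp only [window_eq_window_iff, Nat.forall_lt_succ_right]

theorem window_succ_eq_iff_tail :
    window W (n + 1) i = window W (n + 1) j ↔
      W i = W j ∧ window W n (i + 1) = window W n (j + 1) := by
  simp only [window_eq_window_iff, Nat.forall_lt_succ_left, add_zero, add_assoc, add_comm 1]

theorem ofFn_window (W : ℕ → A) (n i : ℕ) :
    List.ofFn (window W n i) = (List.range n).map fun j => W (i + j) :=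
  List.ext_getElem (by simp) (by simp [window])

theorem complexity_eq_ncard_range_window (W : ℕ → A) (n : ℕ) :
    complexity W n = (Set.range (window W n)).ncard := by
  have hfactors : {u : List A | u.length = n ∧ IsFactor W u} =
      List.ofFn '' Set.range (window W n) := by
    ext u
    simp only [IsFactor, occursAt, Set.mem_ofPred_eq, Set.mem_image, Set.exists_range_iff,
      ofFn_window]
    constructor
    · rintro ⟨rfl, i, hi⟩
      exact ⟨i, hi.symm⟩
    · rintro ⟨i, rfl⟩
      exact ⟨by simp, i, by simp⟩
  rw [complexity, hfactors, Set.ncard_image_of_injective _ List.ofFn_injective]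

theorem complexity_zero (W : ℕ → A) : complexity W 0 = 1 := by
  have hconst : window W 0 = fun _ => Fin.elim0 := funext fun _ => Subsingleton.elim _ _
  rw [complexity_eq_ncard_range_window, hconst, Set.range_const, Set.ncard_singleton]

theorem EventuallyPeriodic.exists_complexity_le (hW : EventuallyPeriodic W) :
    ∃ C, ∀ n, complexity W n ≤ C := by
  obtain ⟨N, q, hq, hper⟩ := hW
  refine ⟨N + q, fun n => ?_⟩
  have hrange : Set.range (window W n) ⊆ window W n '' (Finset.range (N + q) : Set ℕ) := by
    rintro _ ⟨i, rfl⟩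
    induction i using Nat.strong_induction_on with
    | _ i ih =>
      rcases lt_or_ge i (N + q) with hi | hi
      · exact ⟨i, by simpa using hi, rfl⟩
      · obtain ⟨p, rfl⟩ := Nat.exists_eq_add_of_le' (le_of_add_le_right hi)
        have hshift : window W n (p + q) = window W n p :=
          window_eq_window_iff.2 fun t _ => by
            rw [add_right_comm, hper (p + t) (by omega)]
        rw [hshift]
        exact ih p (by omega)
  calc complexity W n = (Set.range (window W n)).ncard := complexity_eq_ncard_range_window W n
    _ ≤ (window W n '' (Finset.range (N + q) : Set ℕ)).ncard :=
      Set.ncard_le_ncard hrange ((Finset.finite_toSet _).image _)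
    _ ≤ (Finset.range (N + q) : Set ℕ).ncard := Set.ncard_image_le (Finset.finite_toSet _)
    _ = N + q := by rw [Set.ncard_coe_finset, Finset.card_range]

theorem window_succ_eq_of_not_rightSpecial (hij : window W n i = window W n j)
    (hi : ¬RightSpecial W (window W n i)) : window W (n + 1) i = window W (n + 1) j :=
  window_succ_eq_iff_init.2 ⟨hij, by_contra fun hne => hi ⟨i, j, rfl, hij.symm, hne⟩⟩

theorem RightSpecial.tail (h : RightSpecial W (window W (n + 1) k)) :
    RightSpecial W (window W n (k + 1)) := by
  obtain ⟨i, j, hi, hj, hne⟩ := h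
  refine ⟨i + 1, j + 1, (window_succ_eq_iff_tail.1 hi).2, (window_succ_eq_iff_tail.1 hj).2, ?_⟩
  rwa [add_right_comm i, add_right_comm j]

-- A factor that is not right special determines the letter after it, so once a factor recurs
-- after `d` steps, the word keeps repeating those `d` steps.
theorem eventuallyPeriodic_of_forall_not_rightSpecial {d : ℕ} (hd : 0 < d)
    (hk : window W n k = window W n (k + d))
    (hns : ∀ t < d, ¬RightSpecial W (window W n (k + t))) : EventuallyPeriodic W := by
  have hrepeat : ∀ t, window W n (k + t) = window W n (k + t + d) ∧
      ¬RightSpecial W (window W n (k + t)) := by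
    intro t
    induction t using Nat.strong_induction_on with
    | _ t ih =>
      constructor
      · rcases t with _ | t
        · exact hk
        · obtain ⟨heq, hnot⟩ := ih t t.lt_succ_self
          have := (window_succ_eq_iff_tail.1 (window_succ_eq_of_not_rightSpecial heq hnot)).2
          rwa [add_right_comm _ d] at this
      · rcases lt_or_ge t d with ht | ht
        · exact hns t ht
        · obtain ⟨s, rfl⟩ := Nat.exists_eq_add_of_le' ht
          obtain ⟨heq, hnot⟩ := ih s (by omega)
          rwa [← add_assoc, ← heq]
  refine ⟨k, d, hd, fun i hi => ?_⟩
  obtain ⟨t, rfl⟩ := Nat.exists_eq_add_of_le hi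
  obtain ⟨heq, hnot⟩ := hrepeat t
  exact (window_succ_eq_iff_tail.1 (window_succ_eq_of_not_rightSpecial heq hnot)).1.symm

theorem exists_rightSpecial_window [Finite A] (hW : ¬EventuallyPeriodic W) (n j : ℕ) :
    ∃ k, j ≤ k ∧ k < j + complexity W n ∧ RightSpecial W (window W n k) := by
  by_contra! hns
  obtain ⟨k, hk, m, hm, hne, heq⟩ := Set.exists_ne_map_eq_of_ncard_lt_of_maps_to
    (s := (Finset.Icc j (j + complexity W n) : Set ℕ)) (f := window W n)
    (by
      rw [← complexity_eq_ncard_range_window, Set.ncard_coe_finset, Nat.card_Icc]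
      omega)
    (fun k _ => Set.mem_range_self k) (Set.toFinite _)
  simp only [Finset.coe_Icc, Set.mem_Icc] at hk hm
  wlog hlt : k < m generalizing k m
  · exact this m k hne.symm heq.symm hm hk (by omega)
  obtain ⟨d, rfl⟩ := Nat.exists_eq_add_of_le hlt.le
  exact hW (eventuallyPeriodic_of_forall_not_rightSpecial (by omega) heq
    fun t _ => hns (k + t) (by omega) (by omega))

-- Dropping the last letter maps the factors of length `n + 1` onto those of length `n`. It stays
-- onto when one extension of `u` is removed, hence is then injective by cardinality, so no factor
-- other than `u` has two extensions.
theorem RightSpecial.eq [Finite A] (hn : complexity W (n + 1) ≤ complexity W n + 1)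
    {u v : Fin n → A} (hu : RightSpecial W u) (hv : RightSpecial W v) : u = v := by
  obtain ⟨i, i', rfl, hi, hne⟩ := hu
  obtain ⟨j, j', rfl, hj, hne'⟩ := hv
  let S := Set.range (window W (n + 1)) \ {window W (n + 1) i'}
  have hcard : S.ncard ≤ (Set.range (window W n)).ncard := by
    have hS : S.ncard = (Set.range (window W (n + 1))).ncard - 1 :=
      Set.ncard_sdiff_singleton_of_mem (Set.mem_range_self i')
    simp only [complexity_eq_ncard_range_window] at hn
    omega
  have hmaps : ∀ w ∈ S, Fin.init w ∈ Set.range (window W n) := by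
    rintro _ ⟨⟨k, rfl⟩, -⟩
    exact ⟨k, rfl⟩
  have hsurj : ∀ w ∈ Set.range (window W n), ∃ w' ∈ S, Fin.init w' = w := by
    rintro _ ⟨k, rfl⟩
    by_cases hk : window W (n + 1) k = window W (n + 1) i'
    · refine ⟨window W (n + 1) i, ⟨⟨i, rfl⟩, fun h => hne (window_succ_eq_iff_init.1 h).2⟩, ?_⟩
      exact hi.symm.trans (window_succ_eq_iff_init.1 hk).1.symm
    · exact ⟨window W (n + 1) k, ⟨⟨k, rfl⟩, hk⟩, rfl⟩
  by_contra huv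
  have hmem : ∀ k, window W n k = window W n j → window W (n + 1) k ∈ S := fun k hk =>
    ⟨⟨k, rfl⟩, fun h => huv (hi.symm.trans ((window_succ_eq_iff_init.1 h).1.symm.trans hk))⟩
  have hext : window W (n + 1) j = window W (n + 1) j' :=
    Set.inj_on_of_surj_on_of_ncard_le (fun w _ => Fin.init w) hmaps
      (by simpa using hsurj) hcard (hmem j rfl) (hmem j' hj) hj.symm
  exact hne' (window_succ_eq_iff_init.1 hext).2

theorem window_ne_of_palindrome (hij : W i ≠ W j) (hjj : W (j + n + 1) = W j)
    (hw : window W n (i + 1) = window W n (j + 1))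
    (hpal : ∀ s t, s + t + 1 = n → W (j + 1 + s) = W (j + 1 + t))
    (hjk : j ≤ k) (hkj : k ≤ j + n + 1) : window W (n + 1) k ≠ window W (n + 1) i := by
  rw [window_eq_window_iff] at hw
  intro heq
  rw [window_eq_window_iff] at heq
  apply hij
  rcases hjk.eq_or_lt with rfl | hlt
  · exact (heq 0 n.succ_pos).symm
  rcases hkj.eq_or_lt with rfl | hgt
  · exact (heq 0 n.succ_pos).symm.trans hjj
  obtain ⟨s, rfl⟩ := Nat.exists_eq_add_of_le (Nat.succ_le_of_lt hlt)
  obtain ⟨t, rfl⟩ := Nat.exists_eq_add_of_le (show s + 1 ≤ n by omega)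
  calc W i = W (j + 1 + s) := (heq 0 (Nat.succ_pos _)).symm
    _ = W (j + 1 + t) := hpal s t (by omega)
    _ = W (i + 1 + t) := (hw t (by omega)).symm
    _ = W (i + (t + 1)) := by rw [add_assoc, add_comm 1]
    _ = W (j + 1 + s + (t + 1)) := (heq (t + 1) (by omega)).symm
    _ = W (j + (s + 1 + t) + 1) := by congr 1; ring
    _ = W j := hjj

end Windows

section SturmianFactors

variable {W : ℕ → AB} {n i j : ℕ}

theorem Sturmian.complexity_eq (hS : Sturmian W) (n : ℕ) : complexity W n = n + 1 := by
  rcases n.eq_zero_or_pos with rfl | hn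
  · exact complexity_zero W
  · exact hS n hn

theorem Sturmian.not_eventuallyPeriodic (hS : Sturmian W) : ¬EventuallyPeriodic W := by
  intro hper
  obtain ⟨C, hC⟩ := hper.exists_complexity_le
  have := hC C
  rw [hS.complexity_eq] at this
  omega

theorem Sturmian.rightSpecial_eq (hS : Sturmian W) {u v : Fin n → AB} (hu : RightSpecial W u)
    (hv : RightSpecial W v) : u = v :=
  hu.eq (by rw [hS.complexity_eq, hS.complexity_eq]) hv

theorem Sturmian.not_rightSpecial_of_palindrome (hS : Sturmian W) (hij : W i ≠ W j)
    (hjj : W (j + n + 1) = W j) (hw : window W n (i + 1) = window W n (j + 1))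
    (hpal : ∀ s t, s + t + 1 = n → W (j + 1 + s) = W (j + 1 + t)) :
    ¬RightSpecial W (window W (n + 1) i) := by
  intro hi
  obtain ⟨k, hjk, hkj, hk⟩ := exists_rightSpecial_window hS.not_eventuallyPeriodic (n + 1) j
  rw [hS.complexity_eq] at hkj
  exact window_ne_of_palindrome hij hjj hw hpal hjk (by omega) (hS.rightSpecial_eq hk hi)

theorem Sturmian.eq_of_palindrome (hS : Sturmian W) (hii : W (i + n + 1) = W i)
    (hjj : W (j + n + 1) = W j) (hw : window W n (i + 1) = window W n (j + 1))
    (hpal : ∀ s t, s + t + 1 = n → W (j + 1 + s) = W (j + 1 + t)) : W i = W j := by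
  by_contra hij
  obtain ⟨k, -, -, hk⟩ := exists_rightSpecial_window hS.not_eventuallyPeriodic (n + 1) 0
  have hspecial : RightSpecial W (window W n (i + 1)) := by
    refine ⟨i + 1, j + 1, rfl, hw.symm, ?_⟩
    rwa [add_right_comm i, add_right_comm j, hii, hjj]
  have htail : window W n (k + 1) = window W n (i + 1) := hS.rightSpecial_eq hk.tail hspecial
  have hpal' : ∀ s t, s + t + 1 = n → W (i + 1 + s) = W (i + 1 + t) := fun s t hst => by
    rw [window_eq_window_iff] at hw
    rw [hw s (by omega), hw t (by omega), hpal s t hst]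
  have hletter : W k = W i ∨ W k = W j := by
    revert hij
    cases W k <;> cases W i <;> cases W j <;> simp
  rcases hletter with hki | hkj
  · rw [window_succ_eq_iff_tail.2 ⟨hki, htail⟩] at hk
    exact hS.not_rightSpecial_of_palindrome hij hjj hw hpal hk
  · rw [window_succ_eq_iff_tail.2 ⟨hkj, htail.trans hw⟩] at hk
    exact hS.not_rightSpecial_of_palindrome (Ne.symm hij) hii hw.symm hpal' hk

end SturmianFactors

section Heights

variable {W : ℕ → AB} {h : ℕ → ℤ} {i j m : ℕ}

/-- `h` is a height function of the binary word `W`: up to an additive constant, `h n` is the number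
of letters `a` among the first `n` letters of `W`. -/
def IsHeight (W : ℕ → AB) (h : ℕ → ℤ) : Prop :=
  ∀ n, h (n + 1) = h n + if W n = AB.a then 1 else 0

/-- Any two increments of `h` over intervals of the same length differ by at most one. For a height
function of a binary word this is balancedness of the word. -/
def IsBalanced (h : ℕ → ℤ) : Prop :=
  ∀ n i j, h (i + n) - h i ≤ h (j + n) - h j + 1

theorem exists_isHeight (W : ℕ → AB) : ∃ h, IsHeight W h :=
  ⟨fun n => ∑ i ∈ Finset.range n, if W i = AB.a then 1 else 0, fun _ => Finset.sum_range_succ _ _⟩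

theorem isHeight_iff_of_le_of_le (hle : ∀ n, h n ≤ h (n + 1)) (hle' : ∀ n, h (n + 1) ≤ h n + 1) :
    IsHeight W h ↔ ∀ n, W n = AB.a ↔ h n < h (n + 1) := by
  refine forall_congr' fun n => ?_
  have := hle n
  have := hle' n
  by_cases hn : W n = AB.a <;> simp only [hn, if_true, if_false, true_iff, false_iff] <;> omega

theorem IsHeight.le_succ (hh : IsHeight W h) (n : ℕ) : h n ≤ h (n + 1) := by
  rw [hh n]
  split_ifs <;> omega

theorem IsHeight.succ_le (hh : IsHeight W h) (n : ℕ) : h (n + 1) ≤ h n + 1 := by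
  rw [hh n]
  split_ifs <;> omega

theorem IsHeight.letter_eq_iff (hh : IsHeight W h) :
    W i = W j ↔ h (i + 1) - h i = h (j + 1) - h j := by
  rw [hh i, hh j]
  cases W i <;> cases W j <;> simp

/-- The intervals of length `m + 2` at `i` and `j` form a shortest counterexample to `h` being
balanced. Length below two cannot occur for a height function. -/
structure IsMinimalUnbalanced (h : ℕ → ℤ) (m i j : ℕ) : Prop where
  unbalanced : h (j + m + 2) - h j + 2 ≤ h (i + m + 2) - h i
  minimal : ∀ k < m + 2, ∀ i j, h (i + k) - h i ≤ h (j + k) - h j + 1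

theorem IsHeight.exists_isMinimalUnbalanced (hh : IsHeight W h) (hb : ¬IsBalanced h) :
    ∃ m i j, IsMinimalUnbalanced h m i j := by
  classical
  simp only [IsBalanced, not_forall, not_le] at hb
  obtain ⟨i, j, hij⟩ := Nat.find_spec hb
  have hmin : ∀ k < Nat.find hb, ∀ i j, h (i + k) - h i ≤ h (j + k) - h j + 1 := by
    simpa only [not_exists, not_lt] using fun k (hk : k < Nat.find hb) => Nat.find_min hb hk
  generalize Nat.find hb = n at hij hmin
  match n with
  | 0 => simp at hij
  | 1 =>
    have := hh.succ_le i
    have := hh.le_succ j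
    omega
  | m + 2 => exact ⟨m, i, j, by simp only [← add_assoc] at hij; omega, hmin⟩

namespace IsMinimalUnbalanced

theorem sub_eq_sub_add_one (hu : IsMinimalUnbalanced h m i j) {s : ℕ} (hs : s ≤ m) :
    h (i + 1 + s) - h i = h (j + 1 + s) - h j + 1 := by
  obtain ⟨t, rfl⟩ := Nat.exists_eq_add_of_le hs
  have hprefix := hu.minimal (1 + s) (by omega) i j
  have hsuffix := hu.minimal (t + 1) (by omega) (i + 1 + s) (j + 1 + s)
  have hall := hu.unbalanced
  rw [← add_assoc, ← add_assoc] at hprefix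
  rw [show i + 1 + s + (t + 1) = i + (s + t) + 2 by ring,
    show j + 1 + s + (t + 1) = j + (s + t) + 2 by ring] at hsuffix
  omega

theorem endpoints (hu : IsMinimalUnbalanced h m i j) (hh : IsHeight W h) :
    (h (i + 1) = h i + 1 ∧ h (j + 1) = h j) ∧
      h (i + m + 2) = h (i + m + 1) + 1 ∧ h (j + m + 2) = h (j + m + 1) := by
  have hfirst := hu.sub_eq_sub_add_one m.zero_le
  have hlast := hu.sub_eq_sub_add_one le_rfl
  have hall := hu.unbalanced
  have := hh.succ_le i
  have := hh.le_succ j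
  have := hh.succ_le (i + m + 1)
  have := hh.le_succ (j + m + 1)
  rw [add_right_comm i, add_right_comm j] at hlast
  simp only [add_zero, add_assoc, Nat.reduceAdd] at *
  omega

-- Compare the prefix of length `s + 1` of one interval with the suffix of the same length of the
-- other: by minimality these pairs are balanced.
theorem prefix_eq_suffix (hu : IsMinimalUnbalanced h m i j) (hh : IsHeight W h) {s t : ℕ}
    (hst : s + t = m) : h (j + 1 + s) - h (j + 1) = h (j + 1 + m) - h (j + 1 + t) := by
  obtain ⟨⟨-, hj⟩, hi', hj'⟩ := hu.endpoints hh
  have hs := hu.sub_eq_sub_add_one (show s ≤ m by omega)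
  have ht := hu.sub_eq_sub_add_one (show t ≤ m by omega)
  have hm := hu.sub_eq_sub_add_one le_rfl
  have hle := hu.minimal (s + 1) (by omega) i (j + 1 + t)
  have hge := hu.minimal (s + 1) (by omega) (i + 1 + t) j
  rw [add_right_comm i, add_right_comm j] at hm
  rw [show i + (s + 1) = i + 1 + s by ring, show j + 1 + t + (s + 1) = j + m + 2 by omega] at hle
  rw [show j + (s + 1) = j + 1 + s by ring, show i + 1 + t + (s + 1) = i + m + 2 by omega] at hge
  rw [add_right_comm j 1 m]
  omega

theorem letter_ne (hu : IsMinimalUnbalanced h m i j) (hh : IsHeight W h) : W i ≠ W j := by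
  obtain ⟨⟨hi, hj⟩, -, -⟩ := hu.endpoints hh
  rw [Ne, hh.letter_eq_iff]
  omega

theorem letter_eq_left (hu : IsMinimalUnbalanced h m i j) (hh : IsHeight W h) :
    W (i + m + 1) = W i := by
  obtain ⟨⟨hi, -⟩, hi', -⟩ := hu.endpoints hh
  rw [hh.letter_eq_iff, hi, add_assoc (i + m), hi']
  ring

theorem letter_eq_right (hu : IsMinimalUnbalanced h m i j) (hh : IsHeight W h) :
    W (j + m + 1) = W j := by
  obtain ⟨⟨-, hj⟩, -, hj'⟩ := hu.endpoints hh
  rw [hh.letter_eq_iff, hj, add_assoc (j + m), hj']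
  ring

theorem window_eq (hu : IsMinimalUnbalanced h m i j) (hh : IsHeight W h) :
    window W m (i + 1) = window W m (j + 1) := by
  refine window_eq_window_iff.2 fun t ht => hh.letter_eq_iff.2 ?_
  have := hu.sub_eq_sub_add_one ht.le
  have := hu.sub_eq_sub_add_one (Nat.succ_le_of_lt ht)
  simp only [add_assoc, Nat.succ_eq_add_one] at *
  omega

theorem palindrome (hu : IsMinimalUnbalanced h m i j) (hh : IsHeight W h) {s t : ℕ}
    (hst : s + t + 1 = m) : W (j + 1 + s) = W (j + 1 + t) := by
  have := hu.prefix_eq_suffix hh (s := s) (t := t + 1) (by omega)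
  have := hu.prefix_eq_suffix hh (s := s + 1) (t := t) (by omega)
  rw [hh.letter_eq_iff]
  simp only [add_assoc] at *
  omega

end IsMinimalUnbalanced

theorem Sturmian.isBalanced (hS : Sturmian W) (hh : IsHeight W h) : IsBalanced h := by
  by_contra hb
  obtain ⟨m, i, j, hu⟩ := hh.exists_isMinimalUnbalanced hb
  exact hu.letter_ne hh <| hS.eq_of_palindrome (hu.letter_eq_left hh) (hu.letter_eq_right hh)
    (hu.window_eq hh) fun _ _ => hu.palindrome hh

end Heights

section Slope

open Filter

variable {h : ℕ → ℤ} {α : ℝ}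

/-- Every increment of `h` over an interval of length `n` is within one of `n * α`. -/
def HasSlope (h : ℕ → ℤ) (α : ℝ) : Prop :=
  ∀ i n : ℕ, |((h (i + n) - h i : ℤ) : ℝ) - n * α| ≤ 1

theorem exists_forall_le_and_forall_le {ι κ β : Type*} [ConditionallyCompleteLattice β]
    [Nonempty ι] [Nonempty κ] {f : ι → β} {g : κ → β} (hfg : ∀ i k, f i ≤ g k) :
    ∃ x, (∀ i, f i ≤ x) ∧ ∀ k, x ≤ g k :=
  (exists_between_of_forall_le (Set.range_nonempty f) (Set.range_nonempty g)
    (Set.forall_mem_range.2 fun i => Set.forall_mem_range.2 (hfg i))).imp fun _ hx =>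
      ⟨Set.forall_mem_range.1 hx.1, Set.forall_mem_range.1 hx.2⟩

theorem IsBalanced.mul_sub_one_le (hb : IsBalanced h) (i k n m : ℕ) :
    m * (h (i + n) - h i - 1) ≤ h (k + m * n) - h k := by
  induction m with
  | zero => simp
  | succ m ih =>
    have := hb n i (k + m * n)
    rw [add_one_mul, ← add_assoc]
    push_cast
    linarith

theorem IsBalanced.le_mul_add_one (hb : IsBalanced h) (i k n m : ℕ) :
    h (k + m * n) - h k ≤ m * (h (i + n) - h i + 1) := by
  induction m with
  | zero => simp
  | succ m ih =>
    have := hb n (k + m * n) i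
    rw [add_one_mul, ← add_assoc]
    push_cast
    linarith

-- Both `m` copies of an interval of length `n` and `n` copies of one of length `m` measure the
-- increment of `h` over an interval of length `m * n`; so every lower estimate of the slope is at
-- most every upper one.
theorem IsBalanced.exists_hasSlope (hb : IsBalanced h) : ∃ α, HasSlope h α := by
  have hle : ∀ p q : ℕ × ℕ,
      ((h (p.1 + (p.2 + 1)) - h p.1 - 1 : ℤ) : ℝ) / (p.2 + 1 : ℕ) ≤
        ((h (q.1 + (q.2 + 1)) - h q.1 + 1 : ℤ) : ℝ) / (q.2 + 1 : ℕ) := by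
    rintro ⟨i, n⟩ ⟨j, m⟩
    have hlow := hb.mul_sub_one_le i 0 (n + 1) (m + 1)
    have hupp := hb.le_mul_add_one j 0 (m + 1) (n + 1)
    rw [mul_comm (n + 1)] at hupp
    rw [div_le_div_iff₀ (by positivity) (by positivity), mul_comm,
      mul_comm (_ : ℝ) ((n + 1 : ℕ) : ℝ)]
    exact_mod_cast hlow.trans hupp
  obtain ⟨α, hlow, hupp⟩ := exists_forall_le_and_forall_le hle
  refine ⟨α, fun i n => ?_⟩
  rcases n with _ | n
  · simp
  have hlow := (div_le_iff₀' (by positivity)).1 (hlow (i, n))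
  have hupp := (le_div_iff₀' (by positivity)).1 (hupp (i, n))
  push_cast at hlow hupp ⊢
  rw [abs_le]
  constructor <;> linarith

theorem HasSlope.nonneg (hα : HasSlope h α) (hh : Monotone h) : 0 ≤ α := by
  by_contra! hneg
  obtain ⟨n, hn⟩ := exists_nat_gt (1 / -α)
  rw [div_lt_iff₀ (by linarith)] at hn
  have hinc : (0 : ℝ) ≤ (h (0 + n) - h 0 : ℤ) := by
    exact_mod_cast sub_nonneg.2 (hh (Nat.le_add_right 0 n))
  linarith [(abs_le.1 (hα 0 n)).2]

theorem HasSlope.id_sub (hα : HasSlope h α) : HasSlope (fun n => n - h n) (1 - α) := by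
  intro i n
  rw [← abs_neg]
  convert! hα i n using 2
  push_cast
  ring

theorem HasSlope.le_one (hα : HasSlope h α) (hh : ∀ n, h (n + 1) ≤ h n + 1) : α ≤ 1 := by
  refine sub_nonneg.1 (hα.id_sub.nonneg (monotone_nat_of_le_succ fun n => ?_))
  have := hh n
  push_cast
  linarith

theorem eventually_succ_eq_of_monotone_or_antitone {G : ℕ → ℤ} (hG : Monotone G ∨ Antitone G)
    {C : ℤ} (hC : ∀ n, |G n| ≤ C) : ∀ᶠ n in atTop, G (n + 1) = G n := by
  obtain ⟨c, hc⟩ : ∃ c, Tendsto G atTop (nhds c) := by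
    rcases hG with hG | hG
    · exact ⟨_, tendsto_atTop_ciSup hG ⟨C, Set.forall_mem_range.2 fun n => (abs_le.1 (hC n)).2⟩⟩
    · exact ⟨_, tendsto_atTop_ciInf hG ⟨-C, Set.forall_mem_range.2 fun n => (abs_le.1 (hC n)).1⟩⟩
  rw [nhds_discrete, tendsto_pure] at hc
  filter_upwards [hc, (tendsto_add_atTop_nat 1).eventually hc] with n hn hn'
  rw [hn, hn']

theorem IsBalanced.forall_le_or_forall_ge (hb : IsBalanced h) (q : ℕ) (p : ℤ) :
    (∀ n, p ≤ h (n + q) - h n) ∨ ∀ n, h (n + q) - h n ≤ p := by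
  by_contra! hcon
  obtain ⟨⟨i, hi⟩, j, hj⟩ := hcon
  have := hb q j i
  omega

theorem HasSlope.abs_sum_sub_le (hα : HasSlope h α) {q : ℕ} {p : ℤ} (hpq : q * α = p) (n : ℕ) :
    |∑ j ∈ Finset.range q, (h (j + n) - h j) - n * p| ≤ q := by
  have hsum : ((∑ j ∈ Finset.range q, (h (j + n) - h j) - n * p : ℤ) : ℝ) =
      ∑ j ∈ Finset.range q, (((h (j + n) - h j : ℤ) : ℝ) - n * α) := by
    push_cast
    simp only [Finset.sum_sub_distrib, Finset.sum_const, Finset.card_range, nsmul_eq_mul, ← hpq]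
    ring
  have hle : |((∑ j ∈ Finset.range q, (h (j + n) - h j) - n * p : ℤ) : ℝ)| ≤ q := by
    rw [hsum]
    refine (Finset.abs_sum_le_sum_abs _ _).trans ?_
    simpa using Finset.sum_le_card_nsmul (Finset.range q) _ 1 fun j _ => hα j n
  exact_mod_cast hle

-- The defects `h (n + q) - h n - p` have constant sign by balancedness, and they are the increments
-- of the bounded integer sequence `G`.
theorem IsBalanced.eventually_add_sub_eq (hb : IsBalanced h) (hα : HasSlope h α) {q : ℕ} {p : ℤ}
    (hpq : q * α = p) : ∀ᶠ n in atTop, h (n + q) - h n = p := by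
  let G : ℕ → ℤ := fun n => ∑ j ∈ Finset.range q, (h (j + n) - h j) - n * p
  have hstep : ∀ n, G (n + 1) - G n = h (n + q) - h n - p := fun n => by
    have hshift := (Finset.sum_range_succ' (fun j => h (j + n)) q).symm.trans
      (Finset.sum_range_succ (fun j => h (j + n)) q)
    simp only [G, Finset.sum_sub_distrib, ← add_assoc, add_right_comm _ n 1]
    rw [zero_add, add_comm q n] at hshift
    push_cast
    linarith
  have hG : Monotone G ∨ Antitone G :=
    (hb.forall_le_or_forall_ge q p).imp
      (fun hle => monotone_nat_of_le_succ fun n => by linarith [hle n, hstep n])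
      (fun hge => antitone_nat_of_succ_le fun n => by linarith [hge n, hstep n])
  filter_upwards [eventually_succ_eq_of_monotone_or_antitone hG (hα.abs_sum_sub_le hpq)] with n hn
  linarith [hstep n]

theorem IsHeight.eventuallyPeriodic {W : ℕ → AB} (hh : IsHeight W h) {q : ℕ} (hq : 0 < q) {p : ℤ}
    (hper : ∀ᶠ n in atTop, h (n + q) - h n = p) : EventuallyPeriodic W := by
  obtain ⟨N, hN⟩ := eventually_atTop.1 hper
  refine ⟨N, q, hq, fun n hn => hh.letter_eq_iff.2 ?_⟩
  have := hN n hn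
  have := hN (n + 1) (by omega)
  rw [add_right_comm n 1 q] at this
  omega

theorem IsHeight.irrational_slope {W : ℕ → AB} (hh : IsHeight W h) (hW : ¬EventuallyPeriodic W)
    (hb : IsBalanced h) (hα : HasSlope h α) : Irrational α := by
  rintro ⟨r, rfl⟩
  refine hW (hh.eventuallyPeriodic r.den_pos (hb.eventually_add_sub_eq hα (p := r.num) ?_))
  exact_mod_cast Rat.den_mul_eq_num r

theorem HasSlope.exists_intercept (hα : HasSlope h α) :
    ∃ ρ, ∀ n : ℕ, h n ≤ ρ + n * α ∧ ρ + n * α ≤ h n + 1 := by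
  have hle : ∀ m n : ℕ, h m - m * α ≤ h n + 1 - n * α := by
    intro m n
    rcases le_total n m with hnm | hmn
    · obtain ⟨d, rfl⟩ := Nat.exists_eq_add_of_le hnm
      have := (abs_le.1 (hα n d)).2
      push_cast at this ⊢
      linarith
    · obtain ⟨d, rfl⟩ := Nat.exists_eq_add_of_le hmn
      have := (abs_le.1 (hα m d)).1
      push_cast at this ⊢
      linarith
  obtain ⟨ρ, hlow, hupp⟩ := exists_forall_le_and_forall_le hle
  exact ⟨ρ, fun n => ⟨by linarith [hlow n], by linarith [hupp n]⟩⟩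

theorem eq_of_add_mul_eq_intCast (hα : Irrational α) {ρ : ℝ} {m n : ℕ} {a b : ℤ}
    (hm : ρ + m * α = a) (hn : ρ + n * α = b) : m = n := by
  by_contra hne
  refine (hα.intCast_mul (m := (m : ℤ) - n) (by omega)).ne_int (a - b) ?_
  push_cast
  linarith

-- The points `ρ + n * α` lie in `[h n, h n + 1]`. As `α` is irrational, at most one of them is an
-- integer, so either none is a right endpoint, or one is and then none is a left endpoint.
theorem HasSlope.exists_eq_floor_or_eq_ceil (hα : HasSlope h α) (hirr : Irrational α) :
    ∃ ρ : ℝ, (h = fun n : ℕ => ⌊ρ + n * α⌋) ∨ h = fun n : ℕ => ⌈ρ + n * α⌉ := by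
  obtain ⟨ρ, hρ⟩ := hα.exists_intercept
  by_cases hright : ∃ n : ℕ, ρ + n * α = (h n + 1 : ℤ)
  · obtain ⟨n₀, hn₀⟩ := hright
    refine ⟨ρ - 1, Or.inr (funext fun n => (Int.ceil_eq_iff.2 ⟨?_, ?_⟩).symm)⟩
    · have hne : (h n : ℝ) ≠ ρ + n * α := fun hn => by
        obtain rfl := eq_of_add_mul_eq_intCast hirr hn₀ hn.symm
        push_cast at hn₀
        linarith
      linarith [lt_of_le_of_ne (hρ n).1 hne]
    · linarith [(hρ n).2]
  · push Not at hright
    refine ⟨ρ, Or.inl (funext fun n => (Int.floor_eq_iff.2 ⟨(hρ n).1, ?_⟩).symm)⟩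
    exact lt_of_le_of_ne (hρ n).2 (by exact_mod_cast hright n)

end Slope

section MechanicalHeights

variable {W : ℕ → AB} {α : ℝ}

section FloorRing

variable {R : Type*} [CommRing R] [LinearOrder R] [IsStrictOrderedRing R] [FloorRing R]

theorem exists_add_intCast_mem_Ico_iff {x c d : R} :
    (∃ k : ℤ, x + k ∈ Set.Ico c (c + d)) ↔ ⌊x - c - d⌋ < ⌊x - c⌋ := by
  rw [← Set.nonempty_Ioc, ← Int.preimage_Ioc]
  refine (Equiv.neg ℤ).exists_congr fun k => ?_
  simp only [Set.mem_Ico, Set.mem_preimage, Set.mem_Ioc, Equiv.neg_apply, Int.cast_neg]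
  constructor <;> rintro ⟨_, _⟩ <;> constructor <;> linarith

theorem exists_add_intCast_mem_Ioc_iff {x c d : R} :
    (∃ k : ℤ, x + k ∈ Set.Ioc c (c + d)) ↔ ⌈x - c - d⌉ < ⌈x - c⌉ := by
  rw [← Set.nonempty_Ico, ← Int.preimage_Ico]
  refine (Equiv.neg ℤ).exists_congr fun k => ?_
  simp only [Set.mem_Ico, Set.mem_preimage, Set.mem_Ioc, Equiv.neg_apply, Int.cast_neg]
  constructor <;> rintro ⟨_, _⟩ <;> constructor <;> linarith

end FloorRing

theorem AB.eq_a_iff_and_eq_b_iff {x : AB} {p : Prop} :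
    (x = AB.a ↔ p) ∧ (x = AB.b ↔ ¬p) ↔ (x = AB.a ↔ p) := by
  cases x <;> simp

theorem isHeight_floor_iff (h₀ : 0 ≤ α) (h₁ : α ≤ 1) (x c : ℝ) :
    IsHeight W (fun n : ℕ => ⌊x - c - α + n * α⌋) ↔
      ∀ n : ℕ, W n = AB.a ↔ ∃ k : ℤ, x + n * α + k ∈ Set.Ico c (c + α) := by
  rw [isHeight_iff_of_le_of_le]
  · refine forall_congr' fun n => ?_
    have hn : x - c - α + n * α = x + n * α - c - α := by ring
    have hn' : x - c - α + (n + 1 : ℕ) * α = x + n * α - c := by push_cast; ring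
    rw [exists_add_intCast_mem_Ico_iff, hn, hn']
  · exact fun n => Int.floor_le_floor (by push_cast; linarith)
  · intro n
    rw [← Int.floor_add_one]
    exact Int.floor_le_floor (by push_cast; linarith)

theorem isHeight_ceil_iff (h₀ : 0 ≤ α) (h₁ : α ≤ 1) (x c : ℝ) :
    IsHeight W (fun n : ℕ => ⌈x - c - α + n * α⌉) ↔
      ∀ n : ℕ, W n = AB.a ↔ ∃ k : ℤ, x + n * α + k ∈ Set.Ioc c (c + α) := by
  rw [isHeight_iff_of_le_of_le]
  · refine forall_congr' fun n => ?_
    have hn : x - c - α + n * α = x + n * α - c - α := by ring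
    have hn' : x - c - α + (n + 1 : ℕ) * α = x + n * α - c := by push_cast; ring
    rw [exists_add_intCast_mem_Ioc_iff, hn, hn']
  · exact fun n => Int.ceil_le_ceil (by push_cast; linarith)
  · intro n
    rw [← Int.ceil_add_one]
    exact Int.ceil_le_ceil (by push_cast; linarith)

theorem mechanicalIrrational_iff_exists_isHeight :
    MechanicalIrrational W ↔ ∃ α : ℝ, Irrational α ∧ 0 < α ∧ α < 1 ∧ ∃ ρ : ℝ,
      IsHeight W (fun n : ℕ => ⌊ρ + n * α⌋) ∨ IsHeight W (fun n : ℕ => ⌈ρ + n * α⌉) := by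
  simp only [MechanicalIrrational, AB.eq_a_iff_and_eq_b_iff]
  refine exists_congr fun α => and_congr_right fun _ => and_congr_right fun h₀ =>
    and_congr_right fun h₁ => ?_
  simp only [← isHeight_floor_iff h₀.le h₁.le, ← isHeight_ceil_iff h₀.le h₁.le]
  constructor
  · rintro ⟨x, -, c, hc⟩
    exact ⟨x - c - α, hc⟩
  · rintro ⟨ρ, hρ⟩
    exact ⟨0, by simp, -ρ - α, by simpa using hρ⟩

theorem Sturmian.mechanicalIrrational (hS : Sturmian W) : MechanicalIrrational W := by
  obtain ⟨h, hh⟩ := exists_isHeight W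
  have hb := hS.isBalanced hh
  obtain ⟨α, hα⟩ := hb.exists_hasSlope
  have hirr := hh.irrational_slope hS.not_eventuallyPeriodic hb hα
  have h₀ := hα.nonneg (monotone_nat_of_le_succ hh.le_succ)
  have h₁ := hα.le_one hh.succ_le
  obtain ⟨ρ, rfl | rfl⟩ := hα.exists_eq_floor_or_eq_ceil hirr
  all_goals
    refine mechanicalIrrational_iff_exists_isHeight.2
      ⟨α, hirr, h₀.lt_of_ne' hirr.ne_zero, h₁.lt_of_ne hirr.ne_one, ρ, ?_⟩
  · exact Or.inl hh
  · exact Or.inr hh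

end MechanicalHeights

section CountingFactors

variable {A : Type*} {W : ℕ → A} {α : ℝ}

theorem ncard_range_eq_of_forall_eq_iff {ι β γ : Type*} {f : ι → β} {g : ι → γ}
    (hfg : ∀ i j, f i = f j ↔ g i = g j) : (Set.range f).ncard = (Set.range g).ncard := by
  have hker : Setoid.ker f = Setoid.ker g := Setoid.ext hfg
  exact Nat.card_congr <| (Setoid.quotientKerEquivRange f).symm.trans <|
    (Quotient.congrRight (by rw [hker]; intros; rfl)).trans (Setoid.quotientKerEquivRange g)

theorem window_eq_window_iff_of_increments {G : Type*} [AddGroup G] {h : ℕ → G}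
    (hW : ∀ i j, W i = W j ↔ h (i + 1) - h i = h (j + 1) - h j) {n i i' : ℕ} :
    window W n i = window W n i' ↔ ∀ j < n, h (i + (j + 1)) - h i = h (i' + (j + 1)) - h i' := by
  induction n with
  | zero => simp [window_eq_window_iff]
  | succ n ih =>
    rw [window_succ_eq_iff_init, ih, Nat.forall_lt_succ_right, hW]
    refine and_congr_right fun hj => ?_
    have hn : h (i + n) - h i = h (i' + n) - h i' := by
      rcases n with _ | n
      · simp
      · exact hj n n.lt_succ_self
    rw [← add_assoc, ← add_assoc, ← sub_add_sub_cancel (h (i + n + 1)) (h (i + n)) (h i),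
      ← sub_add_sub_cancel (h (i' + n + 1)) (h (i' + n)) (h i'), hn, add_left_inj]

theorem floor_add_sub_floor {R : Type*} [CommRing R] [LinearOrder R] [IsStrictOrderedRing R]
    [FloorRing R] (x z : R) :
    ⌊x + z⌋ - ⌊x⌋ = ⌊z⌋ + if 1 - Int.fract z ≤ Int.fract x then 1 else 0 := by
  have hx := Int.fract_lt_one x
  have hz := Int.fract_lt_one z
  have hx₀ := Int.fract_nonneg x
  have hz₀ := Int.fract_nonneg z
  rw [sub_eq_iff_eq_add, Int.floor_eq_iff]
  split_ifs with hle <;> push_cast <;> constructor <;>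
    linarith [Int.floor_add_fract x, Int.floor_add_fract z]

theorem ncard_range_filter_le {ι β : Type*} [LinearOrder β] (T : Finset β) (y : ι → β)
    (h₀ : ∃ i, ∀ t ∈ T, y i < t) (hT : ∀ t ∈ T, ∃ i, t ≤ y i ∧ ∀ s ∈ T, t < s → y i < s) :
    (Set.range fun i => T.filter (· ≤ y i)).ncard = T.card + 1 := by
  have hrange : (Set.range fun i => T.filter (· ≤ y i)) =
      (insert ∅ (T.image fun t => T.filter (· ≤ t)) : Finset (Finset β)) := by
    ext B
    simp only [Finset.coe_insert, Finset.coe_image, Set.mem_insert_iff, Set.mem_image,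
      Finset.mem_coe]
    constructor
    · rintro ⟨i, rfl⟩
      rcases (T.filter (· ≤ y i)).eq_empty_or_nonempty with hempty | hne
      · exact Or.inl hempty
      · obtain ⟨htT, hty⟩ := Finset.mem_filter.1 (Finset.max'_mem _ hne)
        refine Or.inr ⟨_, htT, Finset.filter_congr fun s hs => ⟨fun hst => hst.trans hty, ?_⟩⟩
        exact fun hsy => Finset.le_max' _ s (Finset.mem_filter.2 ⟨hs, hsy⟩)
    · rintro (rfl | ⟨t, ht, rfl⟩)
      · exact h₀.imp fun i hi => Finset.filter_eq_empty_iff.2 fun t ht => (hi t ht).not_ge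
      · refine (hT t ht).imp fun i hi => Finset.filter_congr fun s hs => ?_
        exact ⟨fun hsy => not_lt.1 fun hts => (hi.2 s hs hts).not_ge hsy,
          fun hst => hst.trans hi.1⟩
  have hinj : Set.InjOn (fun t => T.filter (· ≤ t)) T := by
    intro s hs t ht hst
    have hmem := Finset.ext_iff.1 hst
    simp only [Finset.mem_filter] at hmem
    exact le_antisymm ((hmem s).1 ⟨hs, le_rfl⟩).2 ((hmem t).2 ⟨ht, le_rfl⟩).2
  rw [hrange, Set.ncard_coe_finset, Finset.card_insert_of_notMem, Finset.card_image_of_injOn hinj]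
  simp only [Finset.mem_image, not_exists, not_and]
  exact fun t ht hempty => Finset.filter_eq_empty_iff.1 hempty ht le_rfl

theorem exists_fract_mem_Ioo (hα : Irrational α) (ρ : ℝ) {u v : ℝ} (hu : 0 ≤ u)
    (huv : u < v) (hv : v ≤ 1) : ∃ i : ℕ, Int.fract (ρ + i * α) ∈ Set.Ioo u v := by
  have hdense : DenseRange (· • (α : UnitAddCircle) : ℕ → UnitAddCircle) :=
    denseRange_zsmul_iff_nsmul.1 (AddCircle.denseRange_zsmul_coe_iff.2 (by simpa using hα))
  obtain ⟨x, ⟨i, hi⟩, hux, hxv⟩ := (QuotientAddGroup.dense_preimage_mk.2 hdense).exists_between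
    (x := u - ρ) (y := v - ρ) (by linarith)
  have hcoe : ((Int.fract (ρ + i * α) : ℝ) : UnitAddCircle) = (ρ + x : ℝ) := by
    rw [AddCircle.coe_fract, AddCircle.coe_add, AddCircle.coe_add, ← nsmul_eq_mul]
    exact congrArg _ hi
  have hfract : Int.fract (ρ + i * α) = ρ + x :=
    (AddCircle.coe_eq_coe_iff_of_mem_Ico (a := 0)
      ⟨Int.fract_nonneg _, by simpa using Int.fract_lt_one (ρ + i * α)⟩
      ⟨by linarith, by linarith⟩).1 hcoe
  exact ⟨i, by rw [hfract]; constructor <;> linarith⟩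

theorem exists_fract_between (hα : Irrational α) (ρ : ℝ) (T : Finset ℝ) {t : ℝ}
    (ht : t ∈ Set.Ico 0 1) :
    ∃ i : ℕ, t ≤ Int.fract (ρ + i * α) ∧ ∀ s ∈ T, t < s → Int.fract (ρ + i * α) < s := by
  have hgap : ∀ᶠ v in nhdsWithin t (Set.Ioi t), v ∈ Set.Ioo t 1 ∧ ∀ s ∈ T, t < s → v < s := by
    refine Filter.Eventually.and (Ioo_mem_nhdsGT ht.2) <|
      (Filter.eventually_all_finset T).2 fun s _ => ?_
    by_cases hts : t < s
    · filter_upwards [Ioo_mem_nhdsGT hts] with v hv _ using hv.2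
    · exact Filter.Eventually.of_forall fun _ hts' => absurd hts' hts
  obtain ⟨v, ⟨htv, hv⟩, hvT⟩ := hgap.exists
  obtain ⟨i, hti, hiv⟩ := exists_fract_mem_Ioo hα ρ ht.1 htv hv.le
  exact ⟨i, hti.le, fun s hs hts => hiv.trans (hvT s hs hts)⟩

/-- The endpoints in `(0, 1)` of the arcs of the circle on which the first `n` letters of a
mechanical word of slope `α` are constant as functions of the starting point. -/
noncomputable def cutPoints (α : ℝ) (n : ℕ) : Finset ℝ :=
  (Finset.range n).image fun j : ℕ => 1 - Int.fract ((j + 1 : ℕ) * α)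

theorem card_cutPoints (hα : Irrational α) (n : ℕ) : (cutPoints α n).card = n := by
  rw [cutPoints, Finset.card_image_of_injective, Finset.card_range]
  intro i j hij
  obtain ⟨k, hk⟩ := Int.fract_eq_fract.1 (sub_right_injective hij)
  have hdiff : -((j + 1 : ℕ) * α) + (i + 1 : ℕ) * α = k := by rw [← hk]; ring
  exact Nat.succ_injective <| eq_of_add_mul_eq_intCast hα hdiff
    (b := 0) ((neg_add_cancel _).trans Int.cast_zero.symm)

theorem cutPoints_subset_Ioo (hα : Irrational α) (n : ℕ) :
    (cutPoints α n : Set ℝ) ⊆ Set.Ioo 0 1 := by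
  simp only [cutPoints, Finset.coe_image, Set.image_subset_iff]
  intro j _
  have hne := (hα.natCast_mul j.succ_ne_zero)
  have : 0 < Int.fract ((j + 1 : ℕ) * α) := Int.fract_pos.2 (hne.ne_int _)
  exact ⟨sub_pos.2 (Int.fract_lt_one _), sub_lt_self 1 this⟩

theorem ncard_range_filter_cutPoints (hα : Irrational α) (ρ : ℝ) (n : ℕ) :
    (Set.range fun i : ℕ => (cutPoints α n).filter (· ≤ Int.fract (ρ + i * α))).ncard = n + 1 := by
  have hIoo : ∀ t ∈ cutPoints α n, t ∈ Set.Ioo 0 1 := cutPoints_subset_Ioo hα n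
  rw [ncard_range_filter_le, card_cutPoints hα]
  · obtain ⟨i, -, hi⟩ := exists_fract_between hα ρ (cutPoints α n) (t := 0) (by simp)
    exact ⟨i, fun t ht => hi t ht (hIoo t ht).1⟩
  · exact fun t ht => exists_fract_between hα ρ _ ⟨(hIoo t ht).1.le, (hIoo t ht).2⟩

theorem complexity_eq_of_floor_increments (hα : Irrational α) {ρ : ℝ}
    (hW : ∀ i j : ℕ, W i = W j ↔
      ⌊ρ + (i + 1 : ℕ) * α⌋ - ⌊ρ + i * α⌋ = ⌊ρ + (j + 1 : ℕ) * α⌋ - ⌊ρ + j * α⌋) (n : ℕ) :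
    complexity W n = n + 1 := by
  rw [complexity_eq_ncard_range_window, ← ncard_range_filter_cutPoints hα ρ n]
  refine ncard_range_eq_of_forall_eq_iff fun i i' => ?_
  have hincr : ∀ i j : ℕ, ⌊ρ + (i + (j + 1) : ℕ) * α⌋ - ⌊ρ + i * α⌋ = ⌊(j + 1 : ℕ) * α⌋ +
      if 1 - Int.fract ((j + 1 : ℕ) * α) ≤ Int.fract (ρ + i * α) then 1 else 0 := fun i j => by
    rw [← floor_add_sub_floor, Nat.cast_add i, add_mul, add_assoc]
  rw [window_eq_window_iff_of_increments (h := fun m : ℕ => ⌊ρ + m * α⌋) hW]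
  simp only [hincr, cutPoints, Finset.filter_inj', Finset.forall_mem_image, Finset.mem_range]
  refine forall₂_congr fun j _ => ?_
  split_ifs <;> grind

end CountingFactors

theorem MechanicalIrrational.sturmian {W : ℕ → AB} (hW : MechanicalIrrational W) :
    Sturmian W := by
  obtain ⟨α, hα, -, -, ρ, hh | hh⟩ := mechanicalIrrational_iff_exists_isHeight.1 hW
  · exact fun n _ => complexity_eq_of_floor_increments hα (fun _ _ => hh.letter_eq_iff) n
  · refine fun n _ => complexity_eq_of_floor_increments hα.neg (ρ := -ρ) (fun i j => ?_) n
    have hneg : ∀ m : ℕ, ⌊-ρ + m * -α⌋ = -⌈ρ + m * α⌉ := fun m => by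
      rw [← Int.floor_neg, neg_add, mul_neg]
    rw [hh.letter_eq_iff, hneg, hneg, hneg, hneg]
    omega

theorem sturmian_iff_mechanical_general (W : ℕ → AB) : Sturmian W ↔ MechanicalIrrational W :=
  ⟨Sturmian.mechanicalIrrational, MechanicalIrrational.sturmian⟩

/-- A recurrent binary word is Sturmian iff it is a mechanical word with
irrational slope. -/
theorem sturmian_iff_mechanical (W : ℕ → AB) (hrec : Recurrent W) :
    Sturmian W ↔ MechanicalIrrational W :=
  sturmian_iff_mechanical_general W
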